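/- Let G_d be a compact subgroup of O(d) whose action preserves the hypercube Q^d = {−1,+1}^d, with Haar probability measure π_d; let θ ~ Unif(Q^d) and define F_k(z) = ∫_{G_d} (⟨z, g·z⟩/d)^k π_d(dg). For any fixed integer k ≥ 1 there exists a constant C_k, depending only on k, such that: if k is odd, Var[F_k(θ)] ≤ (C_k/d)·E[F_{k−1}(θ)²] + C_k/d³; if k is even, Var[F_k(θ)] ≤ (C_k/d)·min( E[F_{k−2}(θ)²], E[F_k(θ)²]^{(2k−1)/(2k)} ) + C_k/d³. -/

import Mathlib

/-!
Write `u_g(z) = ⟨z, g z⟩ / d`. The overlaps make the kernel of the action measurable, its cosets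
are null measurable by left invariance, and the image of the group in the linear maps preserving
the cube is finite. So `π` pushes forward to the uniform measure on a finite group `Γ`
(`CubeAction.integral_eq_expect`), which disposes of all measurability questions, and
`F_k(z) = 𝔼_{g ∈ Γ} u_g(z) ^ k`.

By the Efron–Stein inequality (`efronStein`) the variance of `F_k` is at most a quarter of the sum
over `i` of the mean squared increments of `F_k` under flipping the `i`-th sign. The quadratic form
`u_g` is differentiated exactly by the trapezoidal rule, so the increment of `u_g ^ k` is, up to
`O(1/d²)`, a multiple of the sum over the two endpoints of the formal partial derivative
`(k/d) u_g ^ (k - 1) ((g + g⁻¹) z)_i` (`abs_pow_sub_pow_sub_le`). The error contributes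
`O(1/d³)` after squaring and summing over `i`. The squared norm of the formal gradient is
`(4 k² / d) 𝔼_{g,h} u_g ^ (k - 1) u_h ^ (k - 1) u_{g⁻¹h}`, because `u_{g⁻¹} = u_g` and
`⟨g z, h z⟩ = d u_{g⁻¹h}` (`CubeAction.sum_sq_grad_le`).

Bounding `|u| ≤ 1` gives the bounds by `F_{k-1}²` and `F_{k-2}²` (`CubeAction.triple_le_sq`). For
even `k`, writing `a, b, c` for the absolute values of the three overlaps,
`a ^ (k-1) b ^ (k-1) c = (ab) ^ (k - 3/2) (ac) ^ (1/2) (bc) ^ (1/2)`, and each of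
`(ab) ^ k, (ac) ^ k, (bc) ^ k` averages to `F_k²`; Hölder's inequality, in the form of a rescaled
weighted AM–GM, then gives the power `(2k-1)/(2k)` (`CubeAction.expect_triple_le_rpow`).
-/

open MeasureTheory ProbabilityTheory

/-- The uniform probability measure on the hypercube `{-1,1}^d ⊆ ℝ^d`. -/
noncomputable def cubeUniform (d : ℕ) : Measure (Fin d → ℝ) :=
  Measure.pi fun _ => (2 : ENNReal)⁻¹ • (Measure.dirac (1 : ℝ) + Measure.dirac (-1 : ℝ))

/-- The hypercube `{-1,+1}^d ⊆ ℝ^d`. -/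
def cube (d : ℕ) : Set (Fin d → ℝ) := {x | ∀ i, x i = 1 ∨ x i = -1}

namespace HypercubeVariance

open Finset
open scoped BigOperators

/-- The vertex of the hypercube encoded by a Boolean string. -/
def sgn {d : ℕ} (s : Fin d → Bool) : Fin d → ℝ := fun i => if s i then 1 else -1

/-- The Boolean string `s` with its `i`-th entry flipped. -/
def flip {d : ℕ} (i : Fin d) (s : Fin d → Bool) : Fin d → Bool := Function.update s i (!s i)

lemma flip_flip {d : ℕ} (i : Fin d) (s : Fin d → Bool) : flip i (flip i s) = s := by
  funext j
  by_cases h : j = i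
  · subst h; simp [flip]
  · simp [flip, h]

lemma expect_flip {d : ℕ} (i : Fin d) (f : (Fin d → Bool) → ℝ) :
    𝔼 s, f (flip i s) = 𝔼 s, f s :=
  Fintype.expect_equiv ⟨flip i, flip i, flip_flip i, flip_flip i⟩ _ _ fun _ => rfl

lemma sgn_injective {d : ℕ} : Function.Injective (sgn (d := d)) := by
  intro s t h
  funext i
  have := congrFun h i
  simp only [sgn] at this
  cases hs : s i <;> cases ht : t i <;> simp_all <;> norm_num at this

lemma sgn_mem_cube {d : ℕ} (s : Fin d → Bool) : sgn s ∈ cube d := by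
  intro i
  simp only [sgn]
  split_ifs <;> simp

lemma abs_le_one_of_mem_cube {d : ℕ} {x : Fin d → ℝ} (hx : x ∈ cube d) (i : Fin d) :
    |x i| ≤ 1 := by
  rcases hx i with h | h <;> simp [h]

lemma sgn_flip {d : ℕ} (i : Fin d) (s : Fin d → Bool) :
    sgn (flip i s) = sgn s - (2 * sgn s i) • Pi.single i (1 : ℝ) := by
  funext j
  by_cases h : j = i
  · subst h
    cases hs : s j <;> simp [sgn, flip, hs] <;> norm_num
  · rw [Pi.sub_apply, Pi.smul_apply, Pi.single_eq_of_ne h]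
    simp [sgn, flip, h]

/-! ### The uniform measure on the hypercube as a finite average -/

lemma measurableEmbedding_sgn {d : ℕ} : MeasurableEmbedding (sgn (d := d)) :=
  (measurable_of_finite _).measurableEmbedding sgn_injective

/-- The law of a fair coin. -/
noncomputable def coin : Measure Bool :=
  (2 : ENNReal)⁻¹ • (Measure.dirac true + Measure.dirac false)

lemma coin_singleton (b : Bool) : coin {b} = (2 : ENNReal)⁻¹ := by
  cases b <;> simp [coin]

instance : IsFiniteMeasure coin := by
  refine ⟨?_⟩
  simp only [coin, Measure.smul_apply, Measure.add_apply, measure_univ, smul_eq_mul]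
  exact ENNReal.mul_lt_top (by simp) (by simp)

lemma cubeUniform_eq_map (d : ℕ) :
    cubeUniform d = Measure.map (sgn (d := d))
      (Measure.pi fun _ : Fin d => coin) := by
  have hm : Measure.map (fun b : Bool => if b then (1 : ℝ) else -1)
      coin
      = (2 : ENNReal)⁻¹ • (Measure.dirac (1 : ℝ) + Measure.dirac (-1 : ℝ)) := by
    have hf : Measurable (fun b : Bool => if b then (1 : ℝ) else -1) := measurable_of_finite _
    rw [coin, Measure.map_smul, Measure.map_add _ _ hf, Measure.map_dirac' hf, Measure.map_dirac' hf]
    simp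
  have hp : ∀ i : Fin d, SigmaFinite (Measure.map (fun b : Bool => if b then (1 : ℝ) else -1)
      coin) := by
    intro i
    infer_instance
  have := Measure.pi_map_pi (ι := Fin d) (X := fun _ => Bool) (Y := fun _ => ℝ)
    (μ := fun _ => coin)
    (f := fun _ b => if b then (1 : ℝ) else -1) (hμ := hp)
    (fun _ => (measurable_of_finite _).aemeasurable)
  rw [hm] at this
  exact this.symm

lemma integral_cubeUniform (d : ℕ) (f : (Fin d → ℝ) → ℝ) :
    ∫ x, f x ∂(cubeUniform d) = 𝔼 s : Fin d → Bool, f (sgn s) := by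
  rw [cubeUniform_eq_map, measurableEmbedding_sgn.integral_map,
    integral_fintype Integrable.of_finite, Fintype.expect_eq_sum_div_card, Finset.sum_div]
  refine Finset.sum_congr rfl fun s _ => ?_
  rw [measureReal_def, Measure.pi_singleton]
  simp only [coin_singleton]
  simp [div_eq_inv_mul]

lemma variance_cubeUniform (d : ℕ) (f : (Fin d → ℝ) → ℝ) :
    variance f (cubeUniform d)
      = 𝔼 s : Fin d → Bool, f (sgn s) ^ 2 - (𝔼 s : Fin d → Bool, f (sgn s)) ^ 2 := by
  have hf : AEMeasurable f (cubeUniform d) := by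
    rw [cubeUniform_eq_map, measurableEmbedding_sgn.aemeasurable_map_iff]
    exact (measurable_of_finite _).aemeasurable
  rw [variance_eq_integral hf]
  rw [integral_cubeUniform d f, integral_cubeUniform]
  set m := 𝔼 s : Fin d → Bool, f (sgn s) with hm
  have : ∀ s : Fin d → Bool, (f (sgn s) - m) ^ 2 = f (sgn s) ^ 2 - 2 * m * f (sgn s) + m ^ 2 :=
    fun s => by ring
  simp only [this, expect_add_distrib, expect_sub_distrib, ← mul_expect, Fintype.expect_const,
    ← hm]
  ring

/-! ### The Efron–Stein inequality on the discrete cube -/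

lemma expect_cons {d : ℕ} (f : (Fin (d + 1) → Bool) → ℝ) :
    𝔼 s, f s = 𝔼 s : Fin d → Bool,
      (f (Fin.cons true s) + f (Fin.cons false s)) / 2 := by
  rw [← Fintype.expect_equiv (Fin.consEquiv fun _ => Bool)
    (fun p : Bool × (Fin d → Bool) => f (Fin.cons p.1 p.2)) f (fun _ => rfl),
    ← Finset.univ_product_univ, Finset.expect_product, Finset.expect_comm]
  refine Finset.expect_congr rfl fun s _ => ?_
  rw [Fintype.expect_eq_sum_div_card]
  simp

lemma flip_zero_cons {d : ℕ} (b : Bool) (s : Fin d → Bool) :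
    flip 0 (Fin.cons b s : Fin (d + 1) → Bool) = Fin.cons (!b) s := by
  simp [flip, Fin.update_cons_zero]

lemma flip_succ_cons {d : ℕ} (i : Fin d) (b : Bool) (s : Fin d → Bool) :
    flip i.succ (Fin.cons b s : Fin (d + 1) → Bool) = Fin.cons b (flip i s) := by
  simp [flip, Fin.cons_update]

/-- Induction on the dimension: the first coordinate is split off, `f` being replaced by its
average over that coordinate, and the discarded part is exactly the energy of the first flip. -/
lemma efronStein : ∀ (d : ℕ) (f : (Fin d → Bool) → ℝ),
    𝔼 s, f s ^ 2 - (𝔼 s, f s) ^ 2 ≤ (1 / 4) * ∑ i, 𝔼 s, (f s - f (flip i s)) ^ 2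
  | 0, f => by
      simp
  | d + 1, f => by
      set a : (Fin d → Bool) → ℝ := fun s => f (Fin.cons true s) with ha
      set b : (Fin d → Bool) → ℝ := fun s => f (Fin.cons false s) with hb
      have ih := efronStein d fun s => (a s + b s) / 2
      have h0 : 𝔼 s, (f s - f (flip 0 s)) ^ 2 = 𝔼 s : Fin d → Bool, (a s - b s) ^ 2 := by
        rw [expect_cons]
        refine Finset.expect_congr rfl fun s _ => ?_
        rw [flip_zero_cons, flip_zero_cons]
        simp only [Bool.not_true, Bool.not_false, ha, hb]
        ring
      have hi : ∀ i : Fin d, 𝔼 s, ((a s + b s) / 2 - (a (flip i s) + b (flip i s)) / 2) ^ 2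
          ≤ 𝔼 s, (f s - f (flip i.succ s)) ^ 2 := by
        intro i
        rw [expect_cons]
        refine Finset.expect_le_expect fun s _ => ?_
        rw [flip_succ_cons, flip_succ_cons]
        change _ ≤ ((a s - a (flip i s)) ^ 2 + (b s - b (flip i s)) ^ 2) / 2
        nlinarith [sq_nonneg ((a s - a (flip i s)) - (b s - b (flip i s)))]
      have h2 : 𝔼 s, f s ^ 2
          = 𝔼 s, ((a s + b s) / 2) ^ 2 + (1 / 4) * 𝔼 s, (a s - b s) ^ 2 := by
        rw [expect_cons, mul_expect, ← expect_add_distrib]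
        refine Finset.expect_congr rfl fun s _ => ?_
        change (a s ^ 2 + b s ^ 2) / 2 = _
        ring
      rw [Fin.sum_univ_succ, h0, h2, expect_cons f]
      have := Finset.sum_le_sum fun i (_ : i ∈ (Finset.univ : Finset (Fin d))) => hi i
      change _ - (𝔼 s, (a s + b s) / 2) ^ 2 ≤ _
      linarith

/-! ### Elementary inequalities for powers -/

/-- A trapezoidal estimate: if `u - v = (a + b) t` with `|a|, |b| ≤ 2` and `|t| ≤ ε`, then
`u ^ k - v ^ k` agrees up to `O(ε ^ 2)` with the linear terms of slope `a` at `u` and `b` at `v`. -/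
lemma abs_pow_sub_pow_sub_le {u v a b t ε : ℝ} {k : ℕ} (hu : |u| ≤ 1) (hv : |v| ≤ 1)
    (ha : |a| ≤ 2) (hb : |b| ≤ 2) (ht : |t| ≤ ε) (huv : u - v = (a + b) * t) :
    |u ^ k - v ^ k - k * t * (u ^ (k - 1) * a + v ^ (k - 1) * b)| ≤ 16 * k ^ 2 * ε ^ 2 := by
  have hε : 0 ≤ ε := (abs_nonneg t).trans ht
  have hpow : ∀ m : ℕ, |u ^ m - v ^ m| ≤ m * |u - v| := by
    intro m
    refine (abs_pow_sub_pow_le u v m).trans ?_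
    have : max |u| |v| ^ (m - 1) ≤ 1 :=
      pow_le_one₀ (le_max_of_le_left (abs_nonneg _)) (max_le hu hv)
    have h0 : 0 ≤ |u - v| * m := by positivity
    nlinarith
  have hpow' : ∀ {w : ℝ}, |w| ≤ 1 → ∀ m : ℕ, |w ^ m| ≤ 1 := fun hw m => by
    rw [abs_pow]; exact pow_le_one₀ (abs_nonneg _) hw
  -- `Q` is the divided difference of `x ↦ x ^ k`, close to `k u ^ (k - 1)` and `k v ^ (k - 1)`.
  set Q := ∑ i ∈ range k, u ^ i * v ^ (k - 1 - i) with hQ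
  have hQuv : Q * (u - v) = u ^ k - v ^ k := (Commute.all u v).geom_sum₂_mul k
  have hsplit : ∀ i ∈ range k, ∀ w : ℝ, w ^ (k - 1) = w ^ i * w ^ (k - 1 - i) := by
    intro i hi w
    rw [← pow_add]
    congr 1
    have := mem_range.1 hi
    omega
  have hle : ∀ m : ℕ, m ≤ k → (m : ℝ) * |u - v| ≤ k * |u - v| := fun m hm => by gcongr
  have hQu : |Q - k * u ^ (k - 1)| ≤ k * (k * |u - v|) := by
    have : Q - k * u ^ (k - 1) = ∑ i ∈ range k, u ^ i * (v ^ (k - 1 - i) - u ^ (k - 1 - i)) := by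
      simp only [mul_sub, sum_sub_distrib]
      rw [← hQ, sum_congr rfl fun i hi => (hsplit i hi u).symm]
      simp
    rw [this]
    refine (abs_sum_le_sum_abs _ _).trans ?_
    refine (sum_le_card_nsmul _ _ (k * |u - v|) fun i hi => ?_).trans (by simp)
    rw [abs_mul, abs_sub_comm]
    have h1 := hpow (k - 1 - i)
    have h2 := hle (k - 1 - i) (by omega)
    nlinarith [hpow' hu i, abs_nonneg (u ^ (k - 1 - i) - v ^ (k - 1 - i))]
  have hQv : |Q - k * v ^ (k - 1)| ≤ k * (k * |u - v|) := by
    have : Q - k * v ^ (k - 1) = ∑ i ∈ range k, (u ^ i - v ^ i) * v ^ (k - 1 - i) := by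
      simp only [sub_mul, sum_sub_distrib]
      rw [← hQ, sum_congr rfl fun i hi => (hsplit i hi v).symm]
      simp
    rw [this]
    refine (abs_sum_le_sum_abs _ _).trans ?_
    refine (sum_le_card_nsmul _ _ (k * |u - v|) fun i hi => ?_).trans (by simp)
    rw [abs_mul]
    have h1 := hpow i
    have h2 := hle i (mem_range.1 hi).le
    nlinarith [hpow' hv (k - 1 - i), abs_nonneg (u ^ i - v ^ i)]
  have huv' : |u - v| ≤ 4 * ε := by
    rw [huv, abs_mul]
    have : |a + b| ≤ 4 := (abs_add_le a b).trans (by linarith)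
    gcongr
  have key : u ^ k - v ^ k - k * t * (u ^ (k - 1) * a + v ^ (k - 1) * b)
      = t * (a * (Q - k * u ^ (k - 1)) + b * (Q - k * v ^ (k - 1))) := by
    rw [← hQuv, huv]; ring
  have hB : (k : ℝ) * (k * |u - v|) ≤ k * (k * (4 * ε)) := by gcongr
  rw [key, abs_mul]
  calc |t| * |a * (Q - k * u ^ (k - 1)) + b * (Q - k * v ^ (k - 1))|
      ≤ ε * (2 * (k * (k * (4 * ε))) + 2 * (k * (k * (4 * ε)))) := by
        refine mul_le_mul ht ((abs_add_le _ _).trans ?_) (abs_nonneg _) hε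
        rw [abs_mul, abs_mul]
        exact add_le_add (mul_le_mul ha (hQu.trans hB) (abs_nonneg _) (by norm_num))
          (mul_le_mul hb (hQv.trans hB) (abs_nonneg _) (by norm_num))
    _ = 16 * k ^ 2 * ε ^ 2 := by ring

/-- Weighted AM–GM with the weights `1 - 3/(2k), 1/(2k), 1/(2k), 1/(2k)`, after rescaling by an
arbitrary `S > 0`. -/
lemma young_three {a b c S : ℝ} {k : ℕ} (hk : 2 ≤ k) (ha : 0 ≤ a) (hb : 0 ≤ b) (hc : 0 ≤ c)
    (hS : 0 < S) :
    a ^ (k - 1) * b ^ (k - 1) * c ≤ S ^ ((2 * k - 1 : ℝ) / (2 * k)) *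
      ((1 - 3 / (2 * k)) * (a ^ k * b ^ k / S) + 1 / (2 * k) * (a ^ k * c ^ k / S)
        + 1 / (2 * k) * (b ^ k * c ^ k / S) + 1 / (2 * k)) := by
  have hk2 : (2 : ℝ) ≤ k := by exact_mod_cast hk
  have hk0 : (k : ℝ) ≠ 0 := by positivity
  have hw : (0 : ℝ) ≤ 1 / (2 * k) := by positivity
  have hw1 : (0 : ℝ) ≤ 1 - 3 / (2 * k) := by
    rw [sub_nonneg, div_le_one (by positivity)]; linarith
  have h := Real.geom_mean_le_arith_mean4_weighted hw1 hw hw hw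
    (p₁ := a ^ k * b ^ k / S) (p₂ := a ^ k * c ^ k / S) (p₃ := b ^ k * c ^ k / S) (p₄ := 1)
    (by positivity) (by positivity) (by positivity) zero_le_one (by field_simp; ring)
  rw [Real.one_rpow, mul_one, mul_one] at h
  refine le_trans (le_of_eq ?_) (mul_le_mul_of_nonneg_left h (by positivity))
  -- Every factor `x ^ k` raised to a real power `w` is `x ^ (k * w)`.
  have hp : ∀ {x y : ℝ} (w : ℝ), 0 ≤ x → 0 ≤ y →
      (x ^ k * y ^ k / S) ^ w = x ^ (k * w) * y ^ (k * w) / S ^ w := by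
    intro x y w hx hy
    rw [Real.div_rpow (by positivity) hS.le, Real.mul_rpow (by positivity) (by positivity),
      Real.rpow_natCast_mul hx, Real.rpow_natCast_mul hy]
  rw [hp _ ha hb, hp _ ha hc, hp _ hb hc]
  have e1 : (k : ℝ) * (1 - 3 / (2 * k)) = k - 3 / 2 := by field_simp
  have e2 : (k : ℝ) * (1 / (2 * k)) = 1 / 2 := by field_simp
  rw [e1, e2]
  have ex : ∀ {x : ℝ}, 0 ≤ x → x ^ (k - 1) = x ^ ((k : ℝ) - 3 / 2) * x ^ (1 / 2 : ℝ) := by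
    intro x hx
    rw [← Real.rpow_add_of_nonneg hx (by linarith) (by norm_num), ← Real.rpow_natCast]
    congr 1
    rw [Nat.cast_sub (by omega)]
    push_cast; ring
  have ec : c = c ^ (1 / 2 : ℝ) * c ^ (1 / 2 : ℝ) := by
    rw [← Real.rpow_add_of_nonneg hc (by norm_num) (by norm_num)]; norm_num
  have eS : S ^ ((2 * k - 1 : ℝ) / (2 * k))
      = S ^ (1 - 3 / (2 * k : ℝ)) * S ^ (1 / (2 * k : ℝ)) * S ^ (1 / (2 * k : ℝ)) := by
    rw [← Real.rpow_add hS, ← Real.rpow_add hS]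
    congr 1
    field_simp; ring
  rw [ex ha, ex hb, eS]
  nth_rewrite 1 [ec]
  have := (Real.rpow_pos_of_pos hS (1 - 3 / (2 * k : ℝ))).ne'
  have := (Real.rpow_pos_of_pos hS (1 / (2 * k : ℝ))).ne'
  field_simp

/-! ### Orthogonal actions preserving the cube -/

/-- A group acting on `ℝ^d` by inner-product-preserving linear maps that preserve the hypercube. -/
structure CubeAction (d : ℕ) {Γ : Type*} [Group Γ] (ρ : Γ → (Fin d → ℝ) → (Fin d → ℝ)) :
    Prop where
  lin : ∀ g, IsLinearMap ℝ (ρ g)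
  inner : ∀ g x y, ∑ i, ρ g x i * ρ g y i = ∑ i, x i * y i
  mul : ∀ g h x, ρ (g * h) x = ρ g (ρ h x)
  cube : ∀ g, ∀ θ ∈ cube d, ρ g θ ∈ cube d

/-- The normalized overlap `⟨z, g z⟩ / d`. -/
noncomputable def overlap {d : ℕ} {Γ : Type*} (ρ : Γ → (Fin d → ℝ) → (Fin d → ℝ)) (g : Γ)
    (z : Fin d → ℝ) : ℝ := (∑ i, z i * ρ g z i) / d

namespace CubeAction

variable {d : ℕ} {Γ : Type*} [Group Γ] {ρ : Γ → (Fin d → ℝ) → (Fin d → ℝ)}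

lemma one_apply (h : CubeAction d ρ) (x : Fin d → ℝ) : ρ 1 x = x := by
  -- `ρ 1` is an idempotent isometry, so it kills `ρ 1 x - x`, which therefore has norm zero.
  have h1 : ρ 1 (ρ 1 x - x) = 0 := by
    rw [(h.lin 1).map_sub, ← h.mul, one_mul, sub_self]
  have h2 := h.inner 1 (ρ 1 x - x) (ρ 1 x - x)
  rw [h1] at h2
  simp only [Pi.zero_apply, mul_zero, sum_const_zero] at h2
  have h3 := (sum_eq_zero_iff_of_nonneg fun i _ => mul_self_nonneg _).1 h2.symm
  funext i
  have := mul_self_eq_zero.1 (h3 i (mem_univ i))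
  rw [Pi.sub_apply] at this
  linarith

lemma apply_inv_apply (h : CubeAction d ρ) (g : Γ) (x : Fin d → ℝ) : ρ g (ρ g⁻¹ x) = x := by
  rw [← h.mul, mul_inv_cancel, h.one_apply]

lemma adjoint (h : CubeAction d ρ) (g : Γ) (x y : Fin d → ℝ) :
    ∑ i, ρ g x i * y i = ∑ i, x i * ρ g⁻¹ y i := by
  rw [← h.inner g x (ρ g⁻¹ y), h.apply_inv_apply]

lemma overlap_inv (h : CubeAction d ρ) (g : Γ) (z : Fin d → ℝ) :
    overlap ρ g⁻¹ z = overlap ρ g z := by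
  rw [overlap, overlap, ← h.adjoint]
  simp only [mul_comm]

lemma overlap_one (h : CubeAction d ρ) (hd : 1 ≤ d) {z : Fin d → ℝ} (hz : z ∈ _root_.cube d) :
    overlap ρ 1 z = 1 := by
  have : ∀ i, z i * z i = 1 := fun i => by rcases hz i with e | e <;> simp [e]
  have hd' : (d : ℝ) ≠ 0 := by positivity
  simp [overlap, h.one_apply, this, hd']

lemma sum_mul_eq (h : CubeAction d ρ) (hd : 1 ≤ d) (g g' : Γ) (z : Fin d → ℝ) :
    ∑ i, ρ g z i * ρ g' z i = d * overlap ρ (g⁻¹ * g') z := by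
  have hd' : (d : ℝ) ≠ 0 := by positivity
  rw [h.adjoint, overlap, mul_div_cancel₀ _ hd']
  simp only [h.mul]

lemma abs_overlap_le_one (h : CubeAction d ρ) {z : Fin d → ℝ} (hz : z ∈ _root_.cube d) (g : Γ) :
    |overlap ρ g z| ≤ 1 := by
  rw [overlap, abs_div, Nat.abs_cast]
  refine div_le_one_of_le₀ ((abs_sum_le_sum_abs _ _).trans ?_) (Nat.cast_nonneg d)
  refine (sum_le_card_nsmul _ _ 1 fun i _ => ?_).trans (by simp)
  rw [abs_mul]
  exact mul_le_one₀ (abs_le_one_of_mem_cube hz i) (abs_nonneg _)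
    (abs_le_one_of_mem_cube (h.cube g z hz) i)

/-- The `i`-th coordinate of `(g + g⁻¹) z`, the formal `i`-th partial derivative of `⟨z, g z⟩`. -/
def slope (ρ : Γ → (Fin d → ℝ) → (Fin d → ℝ)) (i : Fin d) (g : Γ) (z : Fin d → ℝ) : ℝ :=
  ρ g z i + ρ g⁻¹ z i

lemma abs_slope_le (h : CubeAction d ρ) {z : Fin d → ℝ} (hz : z ∈ _root_.cube d) (i : Fin d)
    (g : Γ) : |slope ρ i g z| ≤ 2 := by
  have h1 := abs_le_one_of_mem_cube (h.cube g z hz) i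
  have h2 := abs_le_one_of_mem_cube (h.cube g⁻¹ z hz) i
  exact (abs_add_le _ _).trans (by linarith)

/-- The trapezoidal rule is exact on the quadratic form `⟨z, g z⟩`. -/
lemma overlap_sub_overlap_flip (h : CubeAction d ρ) (i : Fin d) (g : Γ) (s : Fin d → Bool) :
    overlap ρ g (sgn s) - overlap ρ g (sgn (flip i s))
      = (slope ρ i g (sgn s) + slope ρ i g (sgn (flip i s))) * (sgn s i / d) := by
  set x := sgn s with hx
  set e : Fin d → ℝ := Pi.single i 1 with he
  have hx' : sgn (flip i s) = x - (2 * x i) • e := sgn_flip i s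
  have hρ : ∀ γ, ρ γ (sgn (flip i s)) = ρ γ x - (2 * x i) • ρ γ e := by
    intro γ
    rw [hx', (h.lin γ).map_sub, (h.lin γ).map_smul]
  have hes : ∀ y : Fin d → ℝ, ∑ j, e j * y j = y i := by
    intro y
    simp [he, Pi.single_apply]
  have hsym : ∑ j, x j * ρ g e j = ρ g⁻¹ x i := by
    have := h.adjoint g⁻¹ x e
    rw [inv_inv] at this
    rw [← this, ← hes (ρ g⁻¹ x)]
    simp only [mul_comm]
  have hq : ∑ j, sgn (flip i s) j * ρ g (sgn (flip i s)) j
      = ∑ j, x j * ρ g x j - 2 * x i * ρ g x i - 2 * x i * ρ g⁻¹ x i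
        + (2 * x i) ^ 2 * ρ g e i := by
    rw [hρ, hx', ← hes (ρ g x), ← hes (ρ g e), ← hsym]
    simp only [Pi.sub_apply, Pi.smul_apply, smul_eq_mul, mul_sum, ← sum_sub_distrib,
      ← sum_add_distrib]
    refine sum_congr rfl fun j _ => ?_
    ring
  have hei : ρ g⁻¹ e i = ρ g e i := by
    rw [← hes (ρ g⁻¹ e), ← hes (ρ g e), ← h.adjoint]
    simp only [mul_comm]
  rw [overlap, overlap, hq, slope, slope, hρ, hρ]
  simp only [Pi.sub_apply, Pi.smul_apply, smul_eq_mul, hei]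
  ring

/-! ### The variance bound for finite groups -/

variable [Fintype Γ]

/-- The group average of the `m`-th power of the overlap. -/
noncomputable def avg (ρ : Γ → (Fin d → ℝ) → (Fin d → ℝ)) (m : ℕ) (z : Fin d → ℝ) : ℝ :=
  𝔼 g, overlap ρ g z ^ m

/-- The average `𝔼_{g,h} |u_g|^(k-1) |u_h|^(k-1) |u_{g⁻¹h}|` controlling the squared gradient of
`avg ρ k`, where `u_g` denotes the overlap. -/
noncomputable def triple (ρ : Γ → (Fin d → ℝ) → (Fin d → ℝ)) (k : ℕ) (z : Fin d → ℝ) : ℝ :=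
  𝔼 g, 𝔼 g', |overlap ρ g z| ^ (k - 1) * |overlap ρ g' z| ^ (k - 1) * |overlap ρ (g⁻¹ * g') z|

/-- Up to the factor `k / d`, the `i`-th formal partial derivative of `avg ρ k`. -/
noncomputable def grad (ρ : Γ → (Fin d → ℝ) → (Fin d → ℝ)) (k : ℕ) (i : Fin d)
    (z : Fin d → ℝ) : ℝ :=
  𝔼 g, overlap ρ g z ^ (k - 1) * slope ρ i g z

lemma sq_avg_sub_avg_flip_le (h : CubeAction d ρ) (k : ℕ) (i : Fin d)
    (s : Fin d → Bool) :
    (avg ρ k (sgn s) - avg ρ k (sgn (flip i s))) ^ 2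
      ≤ 4 * k ^ 2 / d ^ 2 * (grad ρ k i (sgn s) ^ 2 + grad ρ k i (sgn (flip i s)) ^ 2)
        + 512 * k ^ 4 / d ^ 4 := by
  set x := sgn s with hx
  set x' := sgn (flip i s) with hx'
  have hxi : |x i| = 1 := by rcases sgn_mem_cube s i with e | e <;> simp [hx, e]
  have ht : |x i / d| = 1 / d := by rw [abs_div, hxi, Nat.abs_cast]
  have hr : |avg ρ k x - avg ρ k x' - k * (x i / d) * (grad ρ k i x + grad ρ k i x')|
      ≤ 16 * k ^ 2 * (1 / d) ^ 2 := by
    have : avg ρ k x - avg ρ k x' - k * (x i / d) * (grad ρ k i x + grad ρ k i x')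
        = 𝔼 g, (overlap ρ g x ^ k - overlap ρ g x' ^ k - k * (x i / d) *
          (overlap ρ g x ^ (k - 1) * slope ρ i g x
            + overlap ρ g x' ^ (k - 1) * slope ρ i g x')) := by
      simp only [avg, grad, expect_sub_distrib, ← mul_expect, expect_add_distrib]
    rw [this]
    refine (abs_expect_le _ _).trans (expect_le univ_nonempty fun g _ => ?_)
    exact abs_pow_sub_pow_sub_le (h.abs_overlap_le_one (sgn_mem_cube _) g)
      (h.abs_overlap_le_one (sgn_mem_cube _) g) (h.abs_slope_le (sgn_mem_cube _) i g)
      (h.abs_slope_le (sgn_mem_cube _) i g) ht.le (h.overlap_sub_overlap_flip i g s)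
  set D := avg ρ k x - avg ρ k x'
  set p := grad ρ k i x
  set p' := grad ρ k i x'
  have ht2 : (x i / d) ^ 2 = 1 / d ^ 2 := by rw [← sq_abs, ht, div_pow, one_pow]
  have h1 : (D - k * (x i / d) * (p + p')) ^ 2 ≤ (16 * k ^ 2 * (1 / d) ^ 2) ^ 2 := by
    rw [← sq_abs]
    exact pow_le_pow_left₀ (abs_nonneg _) hr 2
  have h2 : (k * (x i / d) * (p + p')) ^ 2 ≤ 2 * k ^ 2 / d ^ 2 * (p ^ 2 + p' ^ 2) := by
    rw [mul_pow, mul_pow, ht2]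
    have : (p + p') ^ 2 ≤ 2 * (p ^ 2 + p' ^ 2) := by nlinarith [sq_nonneg (p - p')]
    calc (k : ℝ) ^ 2 * (1 / d ^ 2) * (p + p') ^ 2
        ≤ (k : ℝ) ^ 2 * (1 / d ^ 2) * (2 * (p ^ 2 + p' ^ 2)) := by gcongr
      _ = _ := by ring
  have h3 : D ^ 2 ≤ 2 * (D - k * (x i / d) * (p + p')) ^ 2 + 2 * (k * (x i / d) * (p + p')) ^ 2 := by
    nlinarith [sq_nonneg (D - k * (x i / d) * (p + p') - k * (x i / d) * (p + p'))]
  refine h3.trans ((add_le_add (mul_le_mul_of_nonneg_left h1 zero_le_two)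
    (mul_le_mul_of_nonneg_left h2 zero_le_two)).trans (le_of_eq ?_))
  rw [one_div, inv_pow]
  ring

/-- Since `u_{g⁻¹} = u_g`, the two summands of the slope contribute equally to the gradient, and
its squared norm is a double average over the group involving `⟨g z, h z⟩ = d u_{g⁻¹h}`. -/
lemma sum_sq_grad_le (h : CubeAction d ρ) (hd : 1 ≤ d) (k : ℕ) (z : Fin d → ℝ) :
    ∑ i, grad ρ k i z ^ 2 ≤ 4 * d * triple ρ k z := by
  have hgrad : ∀ i, grad ρ k i z = 2 * 𝔼 g, overlap ρ g z ^ (k - 1) * ρ g z i := by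
    intro i
    have : 𝔼 g, overlap ρ g z ^ (k - 1) * ρ g⁻¹ z i
        = 𝔼 g, overlap ρ g z ^ (k - 1) * ρ g z i :=
      Fintype.expect_equiv (Equiv.inv Γ) _ _ fun g => by
        simp [h.overlap_inv]
    simp only [grad, slope, mul_add, expect_add_distrib, this]
    ring
  have hsum : ∑ i, grad ρ k i z ^ 2 = 4 * d * 𝔼 g, 𝔼 g',
      overlap ρ g z ^ (k - 1) * overlap ρ g' z ^ (k - 1) * overlap ρ (g⁻¹ * g') z := by
    simp only [hgrad, mul_pow, ← mul_sum, sq (𝔼 g, _), Fintype.expect_mul_expect]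
    simp only [← expect_sum_comm, mul_expect]
    refine expect_congr rfl fun g _ => expect_congr rfl fun g' _ => ?_
    rw [mul_comm (4 * (d : ℝ)), mul_assoc _ (overlap ρ (g⁻¹ * g') z),
      mul_left_comm (overlap ρ (g⁻¹ * g') z), mul_comm (overlap ρ (g⁻¹ * g') z),
      ← h.sum_mul_eq hd, mul_sum, mul_sum, mul_sum]
    refine sum_congr rfl fun i _ => ?_
    ring
  rw [hsum]
  refine mul_le_mul_of_nonneg_left ?_ (by positivity)
  refine expect_le_expect fun g _ => expect_le_expect fun g' _ => ?_
  rw [← abs_pow, ← abs_pow, ← abs_mul, ← abs_mul]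
  exact le_abs_self _

lemma variance_avg_le (h : CubeAction d ρ) (hd : 1 ≤ d) (k : ℕ) :
    variance (avg ρ k) (cubeUniform d)
      ≤ 8 * k ^ 2 / d * (𝔼 s, triple ρ k (sgn s)) + 128 * k ^ 4 / d ^ 3 := by
  have hd' : (d : ℝ) ≠ 0 := by positivity
  rw [variance_cubeUniform]
  refine (efronStein d fun s => avg ρ k (sgn s)).trans ?_
  have h1 : ∀ i : Fin d, 𝔼 s, (avg ρ k (sgn s) - avg ρ k (sgn (flip i s))) ^ 2
      ≤ 8 * k ^ 2 / d ^ 2 * 𝔼 s, grad ρ k i (sgn s) ^ 2 + 512 * k ^ 4 / d ^ 4 := by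
    intro i
    refine (expect_le_expect fun s _ => h.sq_avg_sub_avg_flip_le k i s).trans (le_of_eq ?_)
    rw [expect_add_distrib, Fintype.expect_const, ← mul_expect, expect_add_distrib,
      expect_flip i fun s => grad ρ k i (sgn s) ^ 2]
    ring
  have h2 : ∑ i, 𝔼 s, grad ρ k i (sgn s) ^ 2 ≤ 4 * d * 𝔼 s, triple ρ k (sgn s) := by
    rw [← expect_sum_comm, mul_expect]
    exact expect_le_expect fun s _ => h.sum_sq_grad_le hd k (sgn s)
  calc 1 / 4 * ∑ i, 𝔼 s, (avg ρ k (sgn s) - avg ρ k (sgn (flip i s))) ^ 2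
      ≤ 1 / 4 * ∑ i : Fin d,
          (8 * k ^ 2 / d ^ 2 * 𝔼 s, grad ρ k i (sgn s) ^ 2 + 512 * k ^ 4 / d ^ 4) := by
        gcongr with i
        exact h1 i
    _ = 2 * k ^ 2 / d ^ 2 * ∑ i, 𝔼 s, grad ρ k i (sgn s) ^ 2 + 128 * k ^ 4 / d ^ 3 := by
        rw [sum_add_distrib, ← mul_sum]
        simp only [sum_const, card_univ, Fintype.card_fin, nsmul_eq_mul]
        field_simp
        ring
    _ ≤ 2 * k ^ 2 / d ^ 2 * (4 * d * 𝔼 s, triple ρ k (sgn s)) + 128 * k ^ 4 / d ^ 3 := by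
        gcongr
    _ = _ := by
        field_simp
        ring

/-- If `m` is even and at most `k - 1`, the factor `|u_{g⁻¹h}|` and the surplus powers of the
overlaps are bounded by one. -/
lemma triple_le_sq (h : CubeAction d ρ) {k m : ℕ} (hm : Even m) (hmk : m ≤ k - 1)
    {z : Fin d → ℝ} (hz : z ∈ _root_.cube d) : triple ρ k z ≤ avg ρ m z ^ 2 := by
  rw [sq, avg, Fintype.expect_mul_expect]
  refine expect_le_expect fun g _ => expect_le_expect fun g' _ => ?_
  have hle : ∀ γ, |overlap ρ γ z| ^ (k - 1) ≤ overlap ρ γ z ^ m := by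
    intro γ
    rw [← hm.pow_abs (overlap ρ γ z)]
    exact pow_le_pow_of_le_one (abs_nonneg _) (h.abs_overlap_le_one hz γ) hmk
  calc _ ≤ |overlap ρ g z| ^ (k - 1) * |overlap ρ g' z| ^ (k - 1) * 1 := by
        gcongr
        exact h.abs_overlap_le_one hz _
    _ ≤ _ := by
        rw [mul_one]
        exact mul_le_mul (hle g) (hle g') (by positivity) (hm.pow_nonneg _)

/-- Hölder's inequality for the three pairwise products of `|u_g|^k`, `|u_h|^k`, `|u_{g⁻¹h}|^k`,
each of which averages to `(avg ρ k)²` by invariance of the uniform measure on the group. It is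
applied jointly in `g`, `h` and the vertex of the cube. -/
lemma expect_triple_le_rpow (h : CubeAction d ρ) (hd : 1 ≤ d) {k : ℕ} (hk : 2 ≤ k)
    (hke : Even k) :
    𝔼 s, triple ρ k (sgn s)
      ≤ (𝔼 s, avg ρ k (sgn s) ^ 2) ^ ((2 * k - 1 : ℝ) / (2 * k)) := by
  set S := 𝔼 s : Fin d → Bool, avg ρ k (sgn s) ^ 2 with hS
  -- The identity element contributes `1 / |Γ|` to every average, so `S` does not vanish.
  have hpos : 0 < S := by
    refine expect_pos (fun s _ => pow_pos ?_ 2) univ_nonempty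
    refine expect_pos' (fun g _ => hke.pow_nonneg _) ⟨1, mem_univ _, ?_⟩
    rw [h.overlap_one hd (sgn_mem_cube s), one_pow]
    exact one_pos
  have hk0 : (k : ℝ) ≠ 0 := by positivity
  have habs : ∀ (γ : Γ) z, |overlap ρ γ z| ^ k = overlap ρ γ z ^ k := fun γ z => hke.pow_abs _
  have hpt : ∀ z, triple ρ k z ≤ S ^ ((2 * k - 1 : ℝ) / (2 * k)) *
      ((1 - 1 / (2 * k)) * (avg ρ k z ^ 2 / S) + 1 / (2 * k)) := by
    intro z
    have h1 : 𝔼 g, 𝔼 g', overlap ρ g z ^ k * overlap ρ g' z ^ k = avg ρ k z ^ 2 := by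
      rw [sq, avg, Fintype.expect_mul_expect]
    have h2 : 𝔼 g, 𝔼 g', overlap ρ g z ^ k * overlap ρ (g⁻¹ * g') z ^ k = avg ρ k z ^ 2 := by
      rw [← h1]
      refine expect_congr rfl fun g _ => ?_
      exact Fintype.expect_equiv (Equiv.mulLeft g⁻¹) _ _ fun g' => rfl
    have h3 : 𝔼 g, 𝔼 g', overlap ρ g' z ^ k * overlap ρ (g⁻¹ * g') z ^ k = avg ρ k z ^ 2 := by
      rw [← h2, expect_comm]
      refine expect_congr rfl fun g _ => expect_congr rfl fun g' _ => ?_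
      rw [← h.overlap_inv (g'⁻¹ * g), mul_inv_rev, inv_inv]
    simp only [← mul_expect] at h1 h2
    refine (expect_le_expect fun g _ => expect_le_expect fun g' _ =>
      young_three hk (abs_nonneg (overlap ρ g z)) (abs_nonneg (overlap ρ g' z))
        (abs_nonneg (overlap ρ (g⁻¹ * g') z)) hpos).trans (le_of_eq ?_)
    simp only [habs, ← mul_expect, expect_add_distrib, ← expect_div, Fintype.expect_const,
      h1, h2, h3]
    ring
  refine (expect_le_expect fun s _ => hpt (sgn s)).trans (le_of_eq ?_)
  rw [← mul_expect, expect_add_distrib, ← mul_expect, ← expect_div, ← hS, div_self hpos.ne',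
    Fintype.expect_const]
  ring

end CubeAction
/-! ### Reduction of the general group to a finite one -/

section Reduction

variable {d : ℕ} {G : Type} [Group G] {ρ : G → (Fin d → ℝ) → (Fin d → ℝ)}

/-- The permutation representation of the group on `ℝ^d` given by the action. -/
noncomputable def CubeAction.toPerm (h : CubeAction d ρ) : G →* Equiv.Perm (Fin d → ℝ) where
  toFun g := ⟨ρ g, ρ g⁻¹, fun x => by rw [← h.mul, inv_mul_cancel, h.one_apply],
    fun x => h.apply_inv_apply g x⟩
  map_one' := by ext x : 1; exact h.one_apply x
  map_mul' g g' := by ext x : 1; exact h.mul g g' x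

/-- A linear map is determined by its values on the hypercube, which is finite and preserved. -/
lemma CubeAction.finite_range (h : CubeAction d ρ) : Finite h.toPerm.range := by
  let code : h.toPerm.range → (Fin d → Bool) → Fin d → Bool :=
    fun σ s i => decide (σ.1 (sgn s) i = 1)
  refine Finite.of_injective code ?_
  rintro ⟨_, g, rfl⟩ ⟨_, g', rfl⟩ hc
  have hs : ∀ s : Fin d → Bool, ρ g (sgn s) = ρ g' (sgn s) := by
    intro s
    funext i
    have h1 : decide (ρ g (sgn s) i = 1) = decide (ρ g' (sgn s) i = 1) :=
      congrFun (congrFun hc s) i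
    rw [decide_eq_decide] at h1
    rcases h.cube g _ (sgn_mem_cube s) i with e | e <;>
      rcases h.cube g' _ (sgn_mem_cube s) i with e' | e' <;> rw [e, e'] at h1 ⊢ <;>
      norm_num at h1
  have he : ∀ i : Fin d, ρ g (Pi.single i 1) = ρ g' (Pi.single i 1) := by
    intro i
    have : (Pi.single i 1 : Fin d → ℝ)
        = (1 / 2 : ℝ) • (sgn (fun _ => true) - sgn (flip i fun _ => true)) := by
      rw [sgn_flip]
      simp [sgn]
    rw [this, (h.lin g).map_smul, (h.lin g').map_smul, (h.lin g).map_sub, (h.lin g').map_sub,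
      hs, hs]
  have hl : (h.lin g).mk' = (h.lin g').mk' := by
    refine LinearMap.pi_ext' fun i => LinearMap.ext_ring ?_
    simpa using he i
  ext x : 2
  exact LinearMap.congr_fun hl x

/-- An element fixes a vector as soon as the overlap with it is full (equality case of the
Cauchy–Schwarz inequality), so the kernel is cut out by the overlaps with the standard basis. -/
lemma CubeAction.mem_ker_iff (h : CubeAction d ρ) (g : G) :
    g ∈ h.toPerm.ker ↔ ∀ i : Fin d,
      ∑ j, (Pi.single i 1 : Fin d → ℝ) j * ρ g (Pi.single i 1) j = 1 := by
  have hnorm : ∀ i : Fin d,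
      ∑ j, (Pi.single i 1 : Fin d → ℝ) j * (Pi.single i 1 : Fin d → ℝ) j = 1 := by
    intro i
    simp [Pi.single_apply]
  constructor
  · intro hg i
    have hgi : ρ g (Pi.single i 1) = Pi.single i 1 := Equiv.congr_fun (MonoidHom.mem_ker.1 hg) _
    rw [hgi, hnorm]
  · intro hg
    have he : ∀ i : Fin d, ρ g (Pi.single i 1) = Pi.single i 1 := by
      intro i
      set e : Fin d → ℝ := Pi.single i 1
      have h0 : ∑ j, (ρ g e j - e j) ^ 2 = 0 := by
        have : ∀ j, (ρ g e j - e j) ^ 2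
            = ρ g e j * ρ g e j - 2 * (e j * ρ g e j) + e j * e j := fun j => by ring
        simp only [this, sum_add_distrib, sum_sub_distrib, ← mul_sum]
        rw [h.inner, hnorm, hg]
        norm_num
      funext j
      have := (sum_eq_zero_iff_of_nonneg fun j _ => sq_nonneg _).1 h0 j (mem_univ j)
      exact sub_eq_zero.1 (pow_eq_zero_iff two_ne_zero |>.1 this)
    have hl : (h.lin g).mk' = LinearMap.id := by
      refine LinearMap.pi_ext' fun i => LinearMap.ext_ring ?_
      simpa using he i
    rw [MonoidHom.mem_ker]
    ext x : 1
    exact LinearMap.congr_fun hl x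

/-- The overlaps only determine the symmetric parts of the group elements, so the action itself
need not be measurable. It is so up to null sets: its kernel is measurable, and the fibres of the
action are the cosets of the kernel, which are null measurable and of equal mass by left
invariance. Hence `π` pushes forward to the uniform measure on the finite image of the group. -/
lemma CubeAction.integral_eq_expect (h : CubeAction d ρ) [Fintype h.toPerm.range]
    [MeasurableSpace G] (π : Measure G) [IsProbabilityMeasure π]
    (hπ : ∀ g₀ : G, Measure.map (fun g => g₀ * g) π = π)
    (hmeas : ∀ z : Fin d → ℝ, Measurable fun g => ∑ i, z i * ρ g z i)
    (f : ((Fin d → ℝ) → (Fin d → ℝ)) → ℝ) :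
    ∫ g, f (ρ g) ∂π = 𝔼 γ : h.toPerm.range, f γ.1 := by
  classical
  set K : Set G := {g | g ∈ h.toPerm.ker} with hK
  have hKm : MeasurableSet K := by
    have : K = ⋂ i : Fin d,
        {g | ∑ j, (Pi.single i 1 : Fin d → ℝ) j * ρ g (Pi.single i 1) j = 1} := by
      ext g
      simp only [hK, Set.mem_ofPred_eq, Set.mem_iInter]
      exact h.mem_ker_iff g
    rw [this]
    exact MeasurableSet.iInter fun i => hmeas _ (measurableSet_singleton 1)
  -- A map that is not almost everywhere measurable has push-forward zero, which is not `π`.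
  have hae : ∀ g₀ : G, AEMeasurable (fun g => g₀ * g) π := by
    intro g₀
    refine AEMeasurable.of_map_ne_zero ?_
    rw [hπ]
    exact IsProbabilityMeasure.ne_zero π
  set fib : h.toPerm.range → Set G := fun γ => {g | h.toPerm.rangeRestrict g = γ} with hfib
  have hcoset : ∀ g₀ : G, fib (h.toPerm.rangeRestrict g₀) = (fun g => g₀⁻¹ * g) ⁻¹' K := by
    intro g₀
    ext g
    simp only [hfib, hK, Set.mem_ofPred_eq, Set.mem_preimage, MonoidHom.mem_ker, map_mul, map_inv,
      inv_mul_eq_one, Subtype.ext_iff, MonoidHom.coe_rangeRestrict]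
    exact eq_comm
  have hnull : ∀ γ, NullMeasurableSet (fib γ) π := by
    intro γ
    obtain ⟨g₀, rfl⟩ := h.toPerm.rangeRestrict_surjective γ
    rw [hcoset]
    exact (hae _).nullMeasurable hKm
  have hmass : ∀ γ, π.real (fib γ) = π.real K := by
    intro γ
    obtain ⟨g₀, rfl⟩ := h.toPerm.rangeRestrict_surjective γ
    rw [hcoset, measureReal_def, ← Measure.map_apply_of_aemeasurable (hae _) hKm, hπ,
      measureReal_def]
  have key : ∀ F : ((Fin d → ℝ) → (Fin d → ℝ)) → ℝ,
      ∫ g, F (ρ g) ∂π = π.real K * ∑ γ : h.toPerm.range, F γ.1 := by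
    intro F
    have hdec : ∀ g, F (ρ g)
        = ∑ γ : h.toPerm.range, (fib γ).indicator (fun _ => F γ.1) g := by
      intro g
      rw [Finset.sum_eq_single (h.toPerm.rangeRestrict g)]
      · rw [Set.indicator_of_mem (by exact rfl)]
        rfl
      · intro γ _ hγ
        exact Set.indicator_of_notMem (fun hg => hγ hg.symm) _
      · intro hn
        exact absurd (mem_univ _) hn
    simp only [hdec]
    rw [integral_finsetSum, mul_sum]
    · refine Finset.sum_congr rfl fun γ _ => ?_
      rw [integral_indicator₀ (hnull γ), setIntegral_const, hmass, smul_eq_mul]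
    · intro γ _
      exact (integrable_const _).indicator₀ (hnull γ)
  have hone := key fun _ => 1
  simp only [integral_const, probReal_univ, smul_eq_mul, mul_one, sum_const, card_univ,
    nsmul_eq_mul] at hone
  rw [key, Fintype.expect_eq_sum_div_card, eq_div_iff (by positivity)]
  linear_combination (-∑ γ : h.toPerm.range, f γ.1) * hone

lemma CubeAction.toRange (h : CubeAction d ρ) :
    CubeAction d fun γ : h.toPerm.range => (γ.1 : (Fin d → ℝ) → (Fin d → ℝ)) where
  lin := by rintro ⟨_, g, rfl⟩; exact h.lin g
  inner := by rintro ⟨_, g, rfl⟩; exact h.inner g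
  mul _ _ _ := rfl
  cube := by rintro ⟨_, g, rfl⟩; exact h.cube g

end Reduction

end HypercubeVariance

/-- **Variance bound for group-averaged overlap powers, hypercube case.**
Let `G` be a compact subgroup of `O(d)` (abstractly: a group acting  on `ℝ^d` by linear,
inner-product-preserving maps) preserving the hypercube `Q^d = {-1,1}^d`, with Haar
probability measure `π`, and `F_k(z) = ∫_G (⟨z, g·z⟩/d)^k dπ(g)`.  For each fixed `k ≥ 1`
there is a constant `C_k` (depending only on `k`) such that, for `θ ~ Unif(Q^d)`:
if `k` is odd, `Var[F_k(θ)] ≤ (C_k/d)·E[F_{k-1}(θ)²] + C_k/d³`; if `k` is even,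
`Var[F_k(θ)] ≤ (C_k/d)·min(E[F_{k-2}(θ)²], E[F_k(θ)²]^{(2k-1)/(2k)}) + C_k/d³`. -/
theorem variance_Fk_hypercube (k : ℕ) (hk : 1 ≤ k) :
    ∃ Ck : ℝ, 0 < Ck ∧
      ∀ (d : ℕ), 1 ≤ d →
      ∀ (G : Type) [Group G] [MeasurableSpace G] (π : Measure G),
        IsProbabilityMeasure π →
        ∀ ρ : G → (Fin d → ℝ) → (Fin d → ℝ),
          (∀ g, IsLinearMap ℝ (ρ g)) →
          (∀ g x y, ∑ i, ρ g x i * ρ g y i = ∑ i, x i * y i) →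
          (∀ g h x, ρ (g * h) x = ρ g (ρ h x)) →
          (∀ g₀ : G, Measure.map (fun g => g₀ * g) π = π) →
          (∀ g, ∀ θ ∈ cube d, ρ g θ ∈ cube d) →
          (∀ z : Fin d → ℝ, Measurable fun g => ∑ i, z i * ρ g z i) →
          let F : ℕ → (Fin d → ℝ) → ℝ :=
            fun m z => ∫ g, ((∑ i, z i * ρ g z i) / d) ^ m ∂π
          (Odd k →
            variance (F k) (cubeUniform d)
              ≤ Ck / d * (∫ θ, F (k - 1) θ ^ 2 ∂(cubeUniform d)) + Ck / (d : ℝ) ^ 3) ∧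
          (Even k →
            variance (F k) (cubeUniform d)
              ≤ Ck / d * min (∫ θ, F (k - 2) θ ^ 2 ∂(cubeUniform d))
                  ((∫ θ, F k θ ^ 2 ∂(cubeUniform d)) ^ ((2 * k - 1 : ℝ) / (2 * k)))
                + Ck / (d : ℝ) ^ 3) := by
  refine ⟨8 * k ^ 2 + 128 * k ^ 4, by positivity, ?_⟩
  intro d hd G _ _ π hprob ρ hlin hinner hmul hπ hcube hmeas F
  have h : HypercubeVariance.CubeAction d ρ := ⟨hlin, hinner, hmul, hcube⟩
  have := h.finite_range
  let _ : Fintype h.toPerm.range := Fintype.ofFinite _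
  have hΓ := h.toRange
  set ρ' : h.toPerm.range → (Fin d → ℝ) → (Fin d → ℝ) := fun γ => γ.1 with hρ'
  have hF : F = HypercubeVariance.CubeAction.avg ρ' := by
    funext m z
    exact h.integral_eq_expect π hπ hmeas fun A => ((∑ i, z i * A z i) / d) ^ m
  have hvar := hΓ.variance_avg_le hd k
  -- It remains to bound the average of `triple`, and to absorb the constants.
  have hfin : ∀ B : ℝ, 0 ≤ B →
      Finset.expect Finset.univ
        (fun s => HypercubeVariance.CubeAction.triple ρ' k (HypercubeVariance.sgn s)) ≤ B →
      variance (F k) (cubeUniform d) ≤ (8 * k ^ 2 + 128 * k ^ 4) / d * B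
        + (8 * k ^ 2 + 128 * k ^ 4) / (d : ℝ) ^ 3 := by
    intro B hB0 hB
    rw [hF]
    refine hvar.trans (add_le_add (mul_le_mul ?_ hB ?_ (by positivity)) ?_)
    · gcongr
      exact le_add_of_nonneg_right (by positivity)
    · exact Finset.expect_nonneg fun s _ => Finset.expect_nonneg fun g _ =>
        Finset.expect_nonneg fun g' _ => by positivity
    · gcongr
      exact le_add_of_nonneg_left (by positivity)
  have hsq : ∀ m, Even m → m ≤ k - 1 →
      Finset.expect Finset.univ
        (fun s => HypercubeVariance.CubeAction.triple ρ' k (HypercubeVariance.sgn s))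
      ≤ ∫ θ, F m θ ^ 2 ∂(cubeUniform d) := by
    intro m hm hmk
    rw [HypercubeVariance.integral_cubeUniform, hF]
    exact Finset.expect_le_expect fun s _ =>
      hΓ.triple_le_sq hm hmk (HypercubeVariance.sgn_mem_cube s)
  have h_nonneg : ∀ m, 0 ≤ ∫ θ, F m θ ^ 2 ∂(cubeUniform d) := fun m =>
    integral_nonneg fun θ => sq_nonneg _
  refine ⟨fun hodd => ?_, fun heven => ?_⟩
  · exact hfin _ (h_nonneg _) (hsq _ (hodd.tsub_odd odd_one) le_rfl)
  · have hk2 : 2 ≤ k := by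
      obtain ⟨r, hr⟩ := heven
      omega
    refine hfin _ (le_min (h_nonneg _) (Real.rpow_nonneg (h_nonneg _) _)) (le_min ?_ ?_)
    · exact hsq _ (heven.tsub even_two) (by omega)
    · rw [HypercubeVariance.integral_cubeUniform, hF]
      exact hΓ.expect_triple_le_rpow hd hk2 heven
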